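/- (Dirichlet expectation of a log coordinate, used in the decomposition of the variational loss) Fix K : ℕ with K ≥ 2 and α : Fin K → ℝ with α k > 0 for all k. Then for every j : Fin K, ∫_D log (μ j x) * f_α x dx = ψ (α j) − ψ (∑_k α k), where the integral is the Lebesgue integral over D ⊆ ℝ^(K−1). -/

import Mathlib

open MeasureTheory Finset

/-- The domain `D ⊆ ℝ^(K−1)` of the first `K − 1` coordinates of the probability simplex. -/
def simplexDomain (K : ℕ) : Set (Fin (K - 1) → ℝ) :=
  {x | (∀ i, 0 ≤ x i) ∧ ∑ i, x i ≤ 1}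

/-- The class probabilities: `μ k x = x k` for `k < K − 1` and `μ (K−1) x = 1 − ∑ i, x i`. -/
noncomputable def dirMu (K : ℕ) (k : Fin K) (x : Fin (K - 1) → ℝ) : ℝ :=
  if h : (k : ℕ) < K - 1 then x ⟨k, h⟩ else 1 - ∑ i, x i

/-- The Dirichlet density with parameter `α` (in the coordinates `x ∈ D`). -/
noncomputable def dirDensity (K : ℕ) (α : Fin K → ℝ) (x : Fin (K - 1) → ℝ) : ℝ :=
  (Real.Gamma (∑ k, α k) / ∏ k, Real.Gamma (α k)) * ∏ k, dirMu K k x ^ (α k - 1)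

/-- The digamma function `ψ s = (log ∘ Γ)' s`. -/
noncomputable def digamma (s : ℝ) : ℝ := deriv (fun t => Real.log (Real.Gamma t)) s

/-!
Under the Dirichlet distribution with parameter `α`, multiplying the density by `(μ j) ^ t` shifts
the parameter `α j` by `t`, so the normalising constants alone give
`E[(μ j) ^ t] = Γ(α j + t) Γ(A) / (Γ(α j) Γ(A + t))` with `A = ∑ k, α k`. This is the moment
generating function of `log (μ j)` at `t`; the expectation of `log (μ j)` is the derivative of its
logarithm at `0`.

The normalising constant itself is the convolution semigroup law of the Riemann–Liouville kernels
`t₊ ^ (a - 1) / Γ(a)`, evaluated at `1`: the last coordinate `1 - ∑ i, x i` is exactly what makes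
the density an iterated convolution.
-/

open ProbabilityTheory
open scoped ENNReal Topology

section Single

variable {ι R : Type*} [DecidableEq ι]

lemma sum_add_single [Fintype ι] [AddCommMonoid R] (a : ι → R) (j : ι) (t : R) :
    ∑ i, (a + Pi.single j t : ι → R) i = ∑ i, a i + t := by
  simp [sum_add_distrib]

lemma add_single_pos [AddCommGroup R] [PartialOrder R] [IsOrderedAddMonoid R] {a : ι → R}
    (ha : ∀ i, 0 < a i) {j : ι} {t : R} (ht : -a j < t) (i : ι) :
    0 < (a + Pi.single j t : ι → R) i := by
  obtain rfl | hij := eq_or_ne i j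
  · simpa using neg_lt_iff_pos_add'.1 ht
  · simpa [hij] using ha i

lemma prod_apply_add_single {M : Type*} [Fintype ι] [AddZeroClass R] [CommGroupWithZero M]
    (f : ι → R → M) (a : ι → R) {j : ι} (hj : f j (a j) ≠ 0) (t : R) :
    ∏ i, f i ((a + Pi.single j t : ι → R) i) = f j (a j + t) / f j (a j) * ∏ i, f i (a i) := by
  rw [Fintype.prod_eq_mul_prod_compl j, Fintype.prod_eq_mul_prod_compl j fun i ↦ f i (a i),
    ← mul_assoc, div_mul_cancel₀ _ hj]
  refine congrArg₂ _ (by simp) (prod_congr rfl fun i hi ↦ ?_)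
  have hij : i ≠ j := by simpa using hi
  simp [hij]

end Single

section Measure

variable {E F : Type*} [NormedAddCommGroup E] [NormedSpace ℝ E] [FiniteDimensional ℝ E]
  [MeasurableSpace E] [BorelSpace E] [AddCommGroup F] [Module ℝ F]

lemma addHaar_linearMap_preimage_singleton (ν : Measure E) [ν.IsAddHaarMeasure] (L : E →ₗ[ℝ] F)
    {c : F} (hc : c ≠ 0) : ν (L ⁻¹' {c}) = 0 := by
  let A : AffineSubspace ℝ E := (AffineSubspace.mk' c ⊥).comap L.toAffineMap
  have hmem (x : E) : x ∈ A ↔ L x = c := by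
    simp [A, AffineSubspace.mem_comap, AffineSubspace.mem_mk', sub_eq_zero]
  have hA : A ≠ ⊤ := fun h ↦ hc.symm (by simpa using (hmem 0).1 (h.ge trivial))
  convert Measure.addHaar_affineSubspace ν A hA using 2
  ext x
  exact (hmem x).symm

lemma lintegral_eq_ofReal_abs_mul_lintegral_comp_mul_left (f : ℝ → ℝ≥0∞) {s : ℝ} (hs : s ≠ 0) :
    ∫⁻ t, f t = ENNReal.ofReal |s| * ∫⁻ u, f (s * u) := by
  conv_lhs => rw [← Real.smul_map_volume_mul_left hs]
  rw [lintegral_smul_measure, smul_eq_mul]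
  exact congrArg _ (lintegral_map_equiv f (MeasurableEquiv.mulLeft₀ s hs))

lemma lintegral_fin_cons {n : ℕ} {f : (Fin (n + 1) → ℝ) → ℝ≥0∞} (hf : Measurable f) :
    ∫⁻ x, f x = ∫⁻ t, ∫⁻ x : Fin n → ℝ, f (Fin.cons t x) := by
  rw [← (volume_preserving_piFinSuccAbove (fun _ ↦ ℝ) 0).symm.lintegral_comp hf,
    Measure.volume_eq_prod, lintegral_prod _ (by fun_prop)]
  simp [MeasurableEquiv.piFinSuccAbove_symm_apply, Fin.insertNthEquiv]

end Measure

section RiemannLiouville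

/-- The Riemann–Liouville kernel `t₊ ^ (a - 1) / Γ(a)`. It is `ℝ≥0∞`-valued, so that no
integrability has to be checked when kernels are convolved. -/
noncomputable def rlKernel (a t : ℝ) : ℝ≥0∞ :=
  if 0 < t then ENNReal.ofReal (t ^ (a - 1) / Real.Gamma a) else 0

@[fun_prop]
lemma measurable_rlKernel (a : ℝ) : Measurable (rlKernel a) :=
  Measurable.ite measurableSet_Ioi (by fun_prop) measurable_const

lemma rlKernel_of_pos {a t : ℝ} (ht : 0 < t) :
    rlKernel a t = ENNReal.ofReal (t ^ (a - 1) / Real.Gamma a) := if_pos ht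

lemma rlKernel_of_nonpos {a t : ℝ} (ht : t ≤ 0) : rlKernel a t = 0 := if_neg ht.not_gt

lemma rlKernel_mul_left (a : ℝ) {s : ℝ} (hs : 0 < s) (u : ℝ) :
    rlKernel a (s * u) = ENNReal.ofReal (s ^ (a - 1)) * rlKernel a u := by
  rcases le_or_gt u 0 with hu | hu
  · rw [rlKernel_of_nonpos hu, rlKernel_of_nonpos (mul_nonpos_of_nonneg_of_nonpos hs.le hu),
      mul_zero]
  · rw [rlKernel_of_pos hu, rlKernel_of_pos (mul_pos hs hu), ← ENNReal.ofReal_mul (by positivity),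
      Real.mul_rpow hs.le hu.le, mul_div_assoc]

lemma rlKernel_mul_rlKernel_one_sub {a b : ℝ} (ha : 0 < a) (hb : 0 < b) (u : ℝ) :
    rlKernel a u * rlKernel b (1 - u) =
      ENNReal.ofReal (Real.Gamma (a + b))⁻¹ * betaPDF a b u := by
  rcases le_or_gt u 0 with h0 | h0
  · rw [rlKernel_of_nonpos h0, betaPDF_eq_zero_of_nonpos h0, zero_mul, mul_zero]
  rcases le_or_gt 1 u with h1 | h1
  · rw [rlKernel_of_nonpos (sub_nonpos.2 h1), betaPDF_eq_zero_of_one_le h1,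
      mul_zero, mul_zero]
  rw [rlKernel_of_pos h0, rlKernel_of_pos (sub_pos.2 h1),
    betaPDF_of_pos_lt_one h0 h1, ← ENNReal.ofReal_mul (by positivity),
    ← ENNReal.ofReal_mul (by positivity), beta]
  congr 1
  field_simp

lemma rlKernel_lconvolution {a b : ℝ} (ha : 0 < a) (hb : 0 < b) :
    rlKernel a ⋆ₗ rlKernel b = rlKernel (a + b) := by
  ext s
  simp only [lconvolution_def, neg_add_eq_sub]
  rcases le_or_gt s 0 with hs | hs
  · have hzero (t : ℝ) : rlKernel a t * rlKernel b (s - t) = 0 := by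
      rcases le_or_gt t 0 with ht | ht
      · rw [rlKernel_of_nonpos ht, zero_mul]
      · rw [rlKernel_of_nonpos (t := s - t) (by linarith), mul_zero]
    simp only [hzero, lintegral_zero, rlKernel_of_nonpos hs]
  have hscale (u : ℝ) : rlKernel a (s * u) * rlKernel b (s - s * u) =
      ENNReal.ofReal (s ^ (a - 1)) * ENNReal.ofReal (s ^ (b - 1)) *
        ENNReal.ofReal (Real.Gamma (a + b))⁻¹ * betaPDF a b u := by
    rw [← mul_one_sub, rlKernel_mul_left a hs, rlKernel_mul_left b hs, mul_mul_mul_comm,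
      rlKernel_mul_rlKernel_one_sub ha hb, mul_assoc, mul_assoc, mul_assoc]
  have hpow : s ^ (a + b - 1) = s * s ^ (a - 1) * s ^ (b - 1) := by
    rw [← Real.rpow_one_add' hs.le (by linarith), ← Real.rpow_add hs]
    congr 1
    ring
  have hmeas : Measurable (betaPDF a b) :=
    (measurable_betaPDFReal a b).ennreal_ofReal
  rw [lintegral_eq_ofReal_abs_mul_lintegral_comp_mul_left _ hs.ne', lintegral_congr hscale,
    lintegral_const_mul _ hmeas,
    lintegral_betaPDF_eq_one ha hb, mul_one, rlKernel_of_pos hs, abs_of_pos hs,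
    hpow, div_eq_mul_inv, ENNReal.ofReal_mul (by positivity), ENNReal.ofReal_mul (by positivity),
    ENNReal.ofReal_mul hs.le, mul_assoc, mul_assoc, mul_assoc]

lemma lintegral_prod_rlKernel_mul {n : ℕ} {a : Fin n → ℝ} (ha : ∀ i, 0 < a i) {b : ℝ} (hb : 0 < b)
    (s : ℝ) :
    ∫⁻ x : Fin n → ℝ, (∏ i, rlKernel (a i) (x i)) * rlKernel b (s - ∑ i, x i) =
      rlKernel (∑ i, a i + b) s := by
  induction n generalizing s with
  | zero => simp [volume_pi]
  | succ n ih =>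
    have htail : 0 < ∑ i : Fin n, a i.succ + b :=
      add_pos_of_nonneg_of_pos (sum_nonneg fun i _ ↦ (ha i.succ).le) hb
    rw [lintegral_fin_cons (by fun_prop)]
    simp only [Fin.prod_univ_succ, Fin.sum_univ_succ, Fin.cons_zero, Fin.cons_succ, mul_assoc,
      ← sub_sub]
    rw [add_assoc, ← rlKernel_lconvolution (ha 0) htail, lconvolution_def]
    refine lintegral_congr fun t ↦ ?_
    rw [lintegral_const_mul _ (by fun_prop), ih (fun i ↦ ha i.succ), neg_add_eq_sub]

end RiemannLiouville

section Simplex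

variable {K : ℕ}

@[fun_prop]
lemma measurable_dirMu (k : Fin K) : Measurable (dirMu K k) := by
  unfold dirMu
  split_ifs <;> fun_prop

lemma dirMu_nonneg {x : Fin (K - 1) → ℝ} (hx : x ∈ simplexDomain K) (k : Fin K) :
    0 ≤ dirMu K k x := by
  unfold dirMu
  split_ifs with h
  · exact hx.1 _
  · exact sub_nonneg.2 hx.2

lemma measurableSet_simplexDomain (K : ℕ) : MeasurableSet (simplexDomain K) := by
  unfold simplexDomain
  measurability

lemma volume_setOf_dirMu_eq_zero (k : Fin K) : volume {x | dirMu K k x = 0} = 0 := by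
  unfold dirMu
  split_ifs with h
  · rw [volume_pi]
    exact Measure.pi_hyperplane _ _ _
  · convert addHaar_linearMap_preimage_singleton volume
      (∑ i, LinearMap.proj i : (Fin (K - 1) → ℝ) →ₗ[ℝ] ℝ) one_ne_zero using 2
    ext x
    simp [sub_eq_zero, eq_comm (a := (1 : ℝ))]

lemma ae_forall_dirMu_pos (K : ℕ) :
    ∀ᵐ x ∂volume.restrict (simplexDomain K), ∀ k, 0 < dirMu K k x := by
  have hne : ∀ᵐ x, ∀ k, dirMu K k x ≠ 0 :=
    ae_all_iff.2 fun k ↦ measure_eq_zero_iff_ae_notMem.1 (volume_setOf_dirMu_eq_zero k)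
  filter_upwards [ae_restrict_of_ae hne, ae_restrict_mem (measurableSet_simplexDomain K)]
    with x hx hxD k
  exact (dirMu_nonneg hxD k).lt_of_ne' (hx k)

end Simplex

section Dirichlet

variable {K : ℕ} {α : Fin K → ℝ}

lemma exists_dirMu_neg_of_notMem [NeZero K] {x : Fin (K - 1) → ℝ} (hx : x ∉ simplexDomain K) :
    ∃ k, dirMu K k x < 0 := by
  contrapose! hx
  refine ⟨fun i ↦ ?_, ?_⟩
  · simpa [dirMu] using hx ⟨i, by omega⟩
  · simpa [dirMu] using hx ⟨K - 1, Nat.sub_one_lt (NeZero.ne K)⟩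

lemma lintegral_prod_rlKernel_dirMu [NeZero K] (hα : ∀ k, 0 < α k) :
    ∫⁻ x in simplexDomain K, ∏ k, rlKernel (α k) (dirMu K k x) = rlKernel (∑ k, α k) 1 := by
  rw [setLIntegral_eq_of_support_subset]
  · obtain ⟨n, rfl⟩ := Nat.exists_eq_succ_of_ne_zero (NeZero.ne K)
    rw [Fin.sum_univ_castSucc,
      ← lintegral_prod_rlKernel_mul (fun i ↦ hα i.castSucc) (hα (Fin.last n))]
    simp [Fin.prod_univ_castSucc, dirMu]
  · rw [Function.support_subset_iff']
    intro x hx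
    obtain ⟨k, hk⟩ := exists_dirMu_neg_of_notMem hx
    exact prod_eq_zero (mem_univ k) (rlKernel_of_nonpos hk.le)

lemma ofReal_dirDensity_eq_mul_prod_rlKernel (hα : ∀ k, 0 < α k) {x : Fin (K - 1) → ℝ}
    (hx : ∀ k, 0 < dirMu K k x) :
    ENNReal.ofReal (dirDensity K α x) =
      ENNReal.ofReal (Real.Gamma (∑ k, α k)) * ∏ k, rlKernel (α k) (dirMu K k x) := by
  have hfactor (k : Fin K) : 0 ≤ dirMu K k x ^ (α k - 1) / Real.Gamma (α k) :=
    div_nonneg (Real.rpow_nonneg (hx k).le _) (Real.Gamma_nonneg_of_nonneg (hα k).le)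
  simp only [rlKernel_of_pos (hx _)]
  rw [← ENNReal.ofReal_prod_of_nonneg fun k _ ↦ hfactor k,
    ← ENNReal.ofReal_mul' (prod_nonneg fun k _ ↦ hfactor k), prod_div_distrib, dirDensity]
  congr 1
  ring

lemma dirDensity_nonneg (hα : ∀ k, 0 < α k) {x : Fin (K - 1) → ℝ} (hx : x ∈ simplexDomain K) :
    0 ≤ dirDensity K α x :=
  mul_nonneg
    (div_nonneg (Real.Gamma_nonneg_of_nonneg (sum_nonneg fun k _ ↦ (hα k).le))
      (prod_nonneg fun k _ ↦ Real.Gamma_nonneg_of_nonneg (hα k).le))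
    (prod_nonneg fun k _ ↦ Real.rpow_nonneg (dirMu_nonneg hx k) _)

@[fun_prop]
lemma measurable_dirDensity (K : ℕ) (α : Fin K → ℝ) : Measurable (dirDensity K α) := by
  unfold dirDensity
  fun_prop

lemma lintegral_dirDensity [NeZero K] (hα : ∀ k, 0 < α k) :
    ∫⁻ x in simplexDomain K, ENNReal.ofReal (dirDensity K α x) = 1 := by
  have hΓ : 0 < Real.Gamma (∑ k, α k) :=
    Real.Gamma_pos_of_pos (sum_pos (fun k _ ↦ hα k) univ_nonempty)
  calc ∫⁻ x in simplexDomain K, ENNReal.ofReal (dirDensity K α x)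
      = ∫⁻ x in simplexDomain K,
          ENNReal.ofReal (Real.Gamma (∑ k, α k)) * ∏ k, rlKernel (α k) (dirMu K k x) :=
        lintegral_congr_ae <| (ae_forall_dirMu_pos K).mono fun x hx ↦
          ofReal_dirDensity_eq_mul_prod_rlKernel hα hx
    _ = ENNReal.ofReal (Real.Gamma (∑ k, α k)) * rlKernel (∑ k, α k) 1 := by
        rw [lintegral_const_mul _ (by fun_prop), lintegral_prod_rlKernel_dirMu hα]
    _ = 1 := by
        rw [rlKernel_of_pos one_pos, Real.one_rpow, ← ENNReal.ofReal_mul hΓ.le,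
          mul_one_div_cancel hΓ.ne', ENNReal.ofReal_one]

/-- The Dirichlet distribution with parameter `α`, as a measure on the first `K - 1` coordinates
of the simplex. -/
noncomputable def dirMeasure (K : ℕ) (α : Fin K → ℝ) : Measure (Fin (K - 1) → ℝ) :=
  (volume.restrict (simplexDomain K)).withDensity fun x ↦ ENNReal.ofReal (dirDensity K α x)

lemma isProbabilityMeasure_dirMeasure [NeZero K] (hα : ∀ k, 0 < α k) :
    IsProbabilityMeasure (dirMeasure K α) :=
  ⟨by rw [dirMeasure, withDensity_apply _ .univ, Measure.restrict_univ, lintegral_dirDensity hα]⟩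

lemma integral_dirMeasure (hα : ∀ k, 0 < α k) (g : (Fin (K - 1) → ℝ) → ℝ) :
    ∫ x, g x ∂dirMeasure K α = ∫ x in simplexDomain K, g x * dirDensity K α x := by
  rw [dirMeasure, integral_withDensity_eq_integral_toReal_smul (by fun_prop) (by simp)]
  refine setIntegral_congr_fun (measurableSet_simplexDomain K) fun x hx ↦ ?_
  simp only [ENNReal.toReal_ofReal (dirDensity_nonneg hα hx), smul_eq_mul, mul_comm]

lemma sum_add_pos (hα : ∀ k, 0 < α k) {j : Fin K} {t : ℝ} (ht : -α j < t) :
    0 < ∑ k, α k + t := by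
  rw [← sum_add_single α j]
  exact sum_pos (fun k _ ↦ add_single_pos hα ht k) ⟨j, mem_univ j⟩

/-- The moment `E[(μ j) ^ t]` of the Dirichlet distribution with parameter `α`, in closed form;
`lintegral_exp_mul_log_dirMu` justifies the name. -/
noncomputable def dirMoment (α : Fin K → ℝ) (j : Fin K) (t : ℝ) : ℝ :=
  Real.Gamma (α j + t) / Real.Gamma (α j) *
    (Real.Gamma (∑ k, α k) / Real.Gamma (∑ k, α k + t))

lemma dirMoment_pos (hα : ∀ k, 0 < α k) {j : Fin K} {t : ℝ} (ht : -α j < t) :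
    0 < dirMoment α j t :=
  mul_pos
    (div_pos (Real.Gamma_pos_of_pos (neg_lt_iff_pos_add'.1 ht)) (Real.Gamma_pos_of_pos (hα j)))
    (div_pos (Real.Gamma_pos_of_pos (sum_pos (fun k _ ↦ hα k) ⟨j, mem_univ j⟩))
      (Real.Gamma_pos_of_pos (sum_add_pos hα ht)))

lemma log_dirMoment (hα : ∀ k, 0 < α k) {j : Fin K} {t : ℝ} (ht : -α j < t) :
    Real.log (dirMoment α j t) =
      Real.log (Real.Gamma (α j + t)) - Real.log (Real.Gamma (∑ k, α k + t)) +
        (Real.log (Real.Gamma (∑ k, α k)) - Real.log (Real.Gamma (α j))) := by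
  have hΓ {s : ℝ} (hs : 0 < s) : Real.Gamma s ≠ 0 := (Real.Gamma_pos_of_pos hs).ne'
  have hΓj := hΓ (hα j)
  have hΓjt := hΓ (neg_lt_iff_pos_add'.1 ht)
  have hΓsum := hΓ (sum_pos (fun k _ ↦ hα k) ⟨j, mem_univ j⟩)
  have hΓsumt := hΓ (sum_add_pos hα ht)
  rw [dirMoment, Real.log_mul (div_ne_zero hΓjt hΓj) (div_ne_zero hΓsum hΓsumt),
    Real.log_div hΓjt hΓj, Real.log_div hΓsum hΓsumt]
  ring

lemma dirDensity_mul_exp_mul_log_dirMu (hα : ∀ k, 0 < α k) {j : Fin K} {t : ℝ} (ht : -α j < t)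
    {x : Fin (K - 1) → ℝ} (hx : 0 < dirMu K j x) :
    dirDensity K α x * Real.exp (t * Real.log (dirMu K j x)) =
      dirMoment α j t * dirDensity K (α + Pi.single j t) x := by
  have hΓj : Real.Gamma (α j) ≠ 0 := (Real.Gamma_pos_of_pos (hα j)).ne'
  have hΓjt : Real.Gamma (α j + t) ≠ 0 :=
    (Real.Gamma_pos_of_pos (neg_lt_iff_pos_add'.1 ht)).ne'
  have hΓsumt : Real.Gamma (∑ k, α k + t) ≠ 0 := (Real.Gamma_pos_of_pos (sum_add_pos hα ht)).ne'
  have hpow : dirMu K j x ^ (α j + t - 1) / dirMu K j x ^ (α j - 1) =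
      Real.exp (t * Real.log (dirMu K j x)) := by
    rw [← Real.rpow_sub hx, Real.rpow_def_of_pos hx]
    ring_nf
  rw [dirDensity, dirDensity, dirMoment, sum_add_single,
    prod_apply_add_single (fun _ ↦ Real.Gamma) α hΓj,
    prod_apply_add_single (fun k s ↦ dirMu K k x ^ (s - 1)) α (Real.rpow_pos_of_pos hx _).ne',
    hpow]
  field_simp

lemma lintegral_exp_mul_log_dirMu (hα : ∀ k, 0 < α k) {j : Fin K} {t : ℝ} (ht : -α j < t) :
    ∫⁻ x, ENNReal.ofReal (Real.exp (t * Real.log (dirMu K j x))) ∂dirMeasure K α =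
      ENNReal.ofReal (dirMoment α j t) := by
  have : NeZero K := ⟨j.pos.ne'⟩
  have hshift : ∀ᵐ x ∂volume.restrict (simplexDomain K),
      ENNReal.ofReal (dirDensity K α x) * ENNReal.ofReal (Real.exp (t * Real.log (dirMu K j x))) =
        ENNReal.ofReal (dirMoment α j t) *
          ENNReal.ofReal (dirDensity K (α + Pi.single j t) x) := by
    filter_upwards [ae_forall_dirMu_pos K] with x hx
    rw [← ENNReal.ofReal_mul' (Real.exp_pos _).le, dirDensity_mul_exp_mul_log_dirMu hα ht (hx j),
      ENNReal.ofReal_mul (dirMoment_pos hα ht).le]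
  rw [dirMeasure, lintegral_withDensity_eq_lintegral_mul _ (by fun_prop) (by fun_prop)]
  simp only [Pi.mul_apply]
  rw [lintegral_congr_ae hshift, lintegral_const_mul _ (by fun_prop),
    lintegral_dirDensity (add_single_pos hα ht), mul_one]

lemma mem_integrableExpSet_log_dirMu (hα : ∀ k, 0 < α k) {j : Fin K} {t : ℝ} (ht : -α j < t) :
    t ∈ integrableExpSet (fun x ↦ Real.log (dirMu K j x)) (dirMeasure K α) := by
  refine ⟨Measurable.aestronglyMeasurable (by fun_prop), ?_⟩
  rw [hasFiniteIntegral_iff_ofReal (.of_forall fun x ↦ (Real.exp_pos _).le),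
    lintegral_exp_mul_log_dirMu hα ht]
  exact ENNReal.ofReal_lt_top

lemma mgf_log_dirMu (hα : ∀ k, 0 < α k) {j : Fin K} {t : ℝ} (ht : -α j < t) :
    mgf (fun x ↦ Real.log (dirMu K j x)) (dirMeasure K α) t = dirMoment α j t := by
  rw [mgf, integral_eq_lintegral_of_nonneg_ae (.of_forall fun x ↦ (Real.exp_pos _).le)
    (Measurable.aestronglyMeasurable (by fun_prop)), lintegral_exp_mul_log_dirMu hα ht,
    ENNReal.toReal_ofReal (dirMoment_pos hα ht).le]

lemma hasDerivAt_log_Gamma_const_add {s : ℝ} (hs : 0 < s) :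
    HasDerivAt (fun t ↦ Real.log (Real.Gamma (s + t))) (digamma s) 0 := by
  have hdiff : DifferentiableAt ℝ (fun t ↦ Real.log (Real.Gamma t)) (s + 0) := by
    rw [add_zero]
    exact ((Real.differentiableOn_Gamma_Ioi s hs).differentiableAt (Ioi_mem_nhds hs)).log
      (Real.Gamma_pos_of_pos hs).ne'
  simpa [digamma] using hdiff.hasDerivAt.comp_const_add s 0

lemma deriv_cgf_log_dirMu_zero (hα : ∀ k, 0 < α k) (j : Fin K) :
    deriv (cgf (fun x ↦ Real.log (dirMu K j x)) (dirMeasure K α)) 0 =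
      digamma (α j) - digamma (∑ k, α k) := by
  have hcgf : cgf (fun x ↦ Real.log (dirMu K j x)) (dirMeasure K α) =ᶠ[𝓝 0] fun t ↦
      Real.log (Real.Gamma (α j + t)) - Real.log (Real.Gamma (∑ k, α k + t)) +
        (Real.log (Real.Gamma (∑ k, α k)) - Real.log (Real.Gamma (α j))) := by
    filter_upwards [Ioi_mem_nhds (neg_lt_zero.2 (hα j))] with t ht
    rw [cgf, mgf_log_dirMu hα ht, log_dirMoment hα ht]
  have hsum : 0 < ∑ k, α k := sum_pos (fun k _ ↦ hα k) ⟨j, mem_univ j⟩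
  rw [hcgf.deriv_eq]
  exact (((hasDerivAt_log_Gamma_const_add (hα j)).sub
    (hasDerivAt_log_Gamma_const_add hsum)).add_const _).deriv

end Dirichlet

/-- the Dirichlet expectation of a log coordinate:
`∫_D log (μ j x) f_α x dx = ψ (α j) − ψ (∑_k α k)`. -/
theorem dirichlet_integral_log_coord (K : ℕ) (hK : 2 ≤ K)
    (α : Fin K → ℝ) (hα : ∀ k, 0 < α k) (j : Fin K) :
    ∫ x in simplexDomain K, Real.log (dirMu K j x) * dirDensity K α x =
      digamma (α j) - digamma (∑ k, α k) := by
  have : NeZero K := ⟨by omega⟩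
  have := isProbabilityMeasure_dirMeasure hα
  have h0 : 0 ∈ interior (integrableExpSet (fun x ↦ Real.log (dirMu K j x)) (dirMeasure K α)) :=
    mem_interior_iff_mem_nhds.2 <| Filter.mem_of_superset (Ioi_mem_nhds (neg_lt_zero.2 (hα j)))
      fun _ ht ↦ mem_integrableExpSet_log_dirMu hα ht
  calc ∫ x in simplexDomain K, Real.log (dirMu K j x) * dirDensity K α x
      = ∫ x, Real.log (dirMu K j x) ∂dirMeasure K α := (integral_dirMeasure hα _).symm
    _ = deriv (cgf (fun x ↦ Real.log (dirMu K j x)) (dirMeasure K α)) 0 := by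
        rw [deriv_cgf_zero h0, probReal_univ, div_one]
    _ = digamma (α j) - digamma (∑ k, α k) := deriv_cgf_log_dirMu_zero hα j
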